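/- Let N ≥ 2 and p > 1, and if N ≥ 3 assume additionally p + 1 < 2N/(N-2). Then there exist constants c₂ ≥ c₁ > 0 and α₀ > 0 such that for all α ≥ α₀: c₁ α^{1 + 2/(p+1)} ≤ S^rad_{α,p} ≤ c₂ α^{1 + 2/(p+1)}, where S^rad_{α,p} is the infimum of the Rayleigh quotient R_{α,p} over the radial members of 𝒞. In particular, every radial u ∈ 𝒞 satisfies R_{α,p}(u) ≥ c₁ α^{1 + 2/(p+1)} for α ≥ α₀. -/

import Mathlib

open MeasureTheory Metric Set Filter

noncomputable section

abbrev E (N : ℕ) := EuclideanSpace ℝ (Fin N)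

/-- The Laplacian: sum of pure second partial derivatives. -/
def lap {N : ℕ} (u : E N → ℝ) (x : E N) : ℝ :=
  ∑ i, fderiv ℝ (fun y => fderiv ℝ u y (EuclideanSpace.single i 1)) x (EuclideanSpace.single i 1)
/-- The admissible class 𝒞: C¹ functions on the closed unit ball, vanishing on the
boundary sphere, not identically zero. -/
def memC {N : ℕ} (u : E N → ℝ) : Prop :=
  ContDiffOn ℝ 1 u (closedBall 0 1) ∧
  (∀ x : E N, ‖x‖ = 1 → u x = 0) ∧
  ∃ x ∈ closedBall (0 : E N) 1, u x ≠ 0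

/-- The Rayleigh quotient R_{α,p}. -/
def ray {N : ℕ} (α p : ℝ) (u : E N → ℝ) : ℝ :=
  (∫ x in ball (0 : E N) 1, ‖gradient u x‖ ^ 2) /
    (∫ x in ball (0 : E N) 1, ‖x‖ ^ α * |u x| ^ (p + 1)) ^ (2 / (p + 1))

/-- The ground-state level S_{α,p}. -/
def Sval (N : ℕ) (α p : ℝ) : ℝ := sInf {c | ∃ u : E N → ℝ, memC u ∧ ray α p u = c}

/-- A function is radial if its value depends only on the norm. -/
def radial {N : ℕ} (u : E N → ℝ) : Prop := ∀ x y : E N, ‖x‖ = ‖y‖ → u x = u y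

/-- The radial ground-state level S^rad_{α,p}. -/
def SradVal (N : ℕ) (α p : ℝ) : ℝ :=
  sInf {c | ∃ u : E N → ℝ, memC u ∧ radial u ∧ ray α p u = c}

def om (N : ℕ) : ℝ := N * volume.real (ball (0 : E N) 1)

lemma om_pos {N : ℕ} (hN : 2 ≤ N) : 0 < om N := by
  unfold om
  have h1 : (0 : ℝ) < N := by exact_mod_cast (by omega : 0 < N)
  have h2 : 0 < volume.real (ball (0 : E N) 1) :=
    ENNReal.toReal_pos (measure_ball_pos volume _ one_pos).ne' measure_ball_lt_top.ne
  positivity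

lemma nontriv {N : ℕ} (hN : 2 ≤ N) : Nontrivial (E N) := by
  have : Nonempty (Fin N) := ⟨⟨0, by omega⟩⟩
  infer_instance

lemma polar {N : ℕ} (hN : 2 ≤ N) (f : ℝ → ℝ) :
    ∫ x in ball (0 : E N) 1, f ‖x‖ = om N * ∫ y in Ioo (0 : ℝ) 1, y ^ (N - 1) * f y := by
  have := nontriv hN
  have h := integral_fun_norm_addHaar (E := E N) volume ((Iio (1 : ℝ)).indicator f)
  have h1 : ∀ x : E N, (Iio (1 : ℝ)).indicator f ‖x‖
      = (ball (0 : E N) 1).indicator (fun x => f ‖x‖) x := by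
    intro x
    by_cases hx : ‖x‖ < 1
    · rw [indicator_of_mem (by exact hx), indicator_of_mem (by simpa using hx)]
    · rw [indicator_of_notMem (by exact hx), indicator_of_notMem (by simpa using hx)]
  simp_rw [h1] at h
  rw [integral_indicator measurableSet_ball] at h
  rw [h]
  have h2 : ∀ y : ℝ, y ^ (Module.finrank ℝ (E N) - 1) • (Iio (1 : ℝ)).indicator f y
      = (Iio (1 : ℝ)).indicator (fun y => y ^ (N - 1) * f y) y := by
    intro y
    by_cases hx : y < 1
    · rw [indicator_of_mem (by exact hx), indicator_of_mem (by simpa using hx)]; simp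
    · rw [indicator_of_notMem (by exact hx), indicator_of_notMem (by simpa using hx)]; simp
  simp_rw [h2]
  rw [setIntegral_indicator measurableSet_Iio, Ioi_inter_Iio]
  simp [om, mul_assoc]

lemma J_cont {k γ : ℝ} (hk : 0 ≤ k) (hγ : 0 ≤ γ) :
    Continuous (fun r : ℝ => (1 - r) ^ k * r ^ γ) := by
  have h1 : Continuous (fun r : ℝ => (1 - r) ^ k) :=
    (continuous_const.sub continuous_id).rpow_const (fun _ => Or.inr hk)
  exact h1.mul (continuous_id.rpow_const (fun _ => Or.inr hγ))

lemma cont_int {f : ℝ → ℝ} (hf : ContinuousOn f (Icc 0 1)) : IntegrableOn f (Ioo 0 1) :=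
  (hf.integrableOn_Icc).mono_set Ioo_subset_Icc_self

lemma J_le {k γ : ℝ} (hk : 0 ≤ k) (hγ : 0 < γ) :
    ∫ r in Ioo (0 : ℝ) 1, (1 - r) ^ k * r ^ γ ≤ (1 / γ) ^ (k + 1) * Real.Gamma (k + 1) := by
  have e1 : ∫ r in Ioo (0 : ℝ) 1, (1 - r) ^ k * r ^ γ
      = ∫ s in Ioo (0 : ℝ) 1, s ^ k * (1 - s) ^ γ := by
    rw [← integral_Ioc_eq_integral_Ioo, ← integral_Ioc_eq_integral_Ioo,
      ← intervalIntegral.integral_of_le zero_le_one, ← intervalIntegral.integral_of_le zero_le_one]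
    have := intervalIntegral.integral_comp_sub_left (a := 0) (b := 1)
      (fun s : ℝ => s ^ k * (1 - s) ^ γ) 1
    simpa using this
  have e2 := Real.integral_rpow_mul_exp_neg_mul_Ioi (a := k + 1) (r := γ) (by linarith) hγ
  have e3 : IntegrableOn (fun t : ℝ => t ^ (k + 1 - 1) * Real.exp (-(γ * t))) (Ioi 0) := by
    by_contra hcon
    rw [integral_undef hcon] at e2
    have : 0 < (1 / γ) ^ (k + 1) * Real.Gamma (k + 1) :=
      mul_pos (Real.rpow_pos_of_pos (by positivity) _) (Real.Gamma_pos_of_pos (by linarith))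
    linarith
  rw [e1, ← e2]
  calc ∫ s in Ioo (0 : ℝ) 1, s ^ k * (1 - s) ^ γ
      ≤ ∫ s in Ioo (0 : ℝ) 1, s ^ (k + 1 - 1) * Real.exp (-(γ * s)) := by
        apply integral_mono_of_nonneg
        · filter_upwards [ae_restrict_mem measurableSet_Ioo] with s hs
          have : 0 ≤ 1 - s := by linarith [hs.2]
          have := hs.1.le
          simp only [Pi.zero_apply]
          positivity
        · exact e3.mono_set Ioo_subset_Ioi_self
        · filter_upwards [ae_restrict_mem measurableSet_Ioo] with s hs
          have h0 : 0 ≤ 1 - s := by linarith [hs.2]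
          have h1 : (1 - s) ^ γ ≤ Real.exp (-(γ * s)) := by
            calc (1 - s) ^ γ ≤ (Real.exp (-s)) ^ γ :=
                  Real.rpow_le_rpow h0 (by linarith [Real.add_one_le_exp (-s)]) hγ.le
              _ = _ := by rw [← Real.exp_mul]; congr 1; ring
          rw [add_sub_cancel_right]
          exact mul_le_mul_of_nonneg_left h1 (Real.rpow_nonneg hs.1.le _)
    _ ≤ _ := by
        apply setIntegral_mono_set e3
        · filter_upwards [ae_restrict_mem measurableSet_Ioi] with s hs
          have : (0 : ℝ) < s := hs
          simp only [Pi.zero_apply]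
          positivity
        · exact Ioo_subset_Ioi_self.eventuallyLE

lemma J_ge {k γ α K : ℝ} (hk : 0 ≤ k) (hγ : 0 ≤ γ) (hα : 4 ≤ α) (hK : γ ≤ K * α) :
    Real.exp (-(4 * K)) * α ^ (-(k + 1)) ≤ ∫ r in Ioo (0 : ℝ) 1, (1 - r) ^ k * r ^ γ := by
  have hα0 : 0 < α := by linarith
  have hc := J_cont hk hγ
  have hs : 2 / α ≤ 1 / 2 := by rw [div_le_div_iff₀ hα0 two_pos]; linarith
  have h12 : 2 / α = 2 * (1 / α) := by ring
  have hs0 : 0 < 1 / α := by positivity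
  have key : Real.exp (-(2 * (2 / α))) ≤ 1 - 2 / α := by
    set s := 2 / α
    rw [Real.exp_neg, inv_le_comm₀ (Real.exp_pos _) (by linarith)]
    have h1 := Real.add_one_le_exp (2 * s)
    refine le_trans ?_ h1
    rw [inv_le_iff_one_le_mul₀ (by linarith)]
    nlinarith
  have hK0 : 0 ≤ K := by
    by_contra h
    push Not at h
    nlinarith
  have h1 : (α ^ (-k) * Real.exp (-(4 * K))) * volume.real (Icc (1 - 2 / α) (1 - 1 / α))
      ≤ ∫ r in Icc (1 - 2 / α) (1 - 1 / α), (1 - r) ^ k * r ^ γ := by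
    apply setIntegral_ge_of_const_le_real measurableSet_Icc measure_Icc_lt_top.ne
    · intro r hr
      have hr0 : 0 < r := by linarith [hr.1]
      apply mul_le_mul _ _ (Real.exp_pos _).le (Real.rpow_nonneg (by linarith [hr.2]) _)
      · calc α ^ (-k) = (1 / α) ^ k := by rw [Real.rpow_neg hα0.le, one_div, Real.inv_rpow hα0.le]
          _ ≤ _ := Real.rpow_le_rpow hs0.le (by linarith [hr.2]) hk
      · calc Real.exp (-(4 * K)) = (Real.exp (-(2 * (2 / α)))) ^ (K * α) := by
              rw [← Real.exp_mul]; congr 1; field_simp; ring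
          _ ≤ (Real.exp (-(2 * (2 / α)))) ^ γ := by
              apply Real.rpow_le_rpow_of_exponent_ge (Real.exp_pos _) _ hK
              rw [Real.exp_le_one_iff]; linarith
          _ ≤ _ := Real.rpow_le_rpow (Real.exp_pos _).le (by linarith [hr.1]) hγ
    · exact hc.continuousOn.integrableOn_Icc
  calc _ = (α ^ (-k) * Real.exp (-(4 * K))) * volume.real (Icc (1 - 2 / α) (1 - 1 / α)) := by
        rw [Real.volume_real_Icc_of_le (by linarith), neg_add, Real.rpow_add hα0, Real.rpow_neg_one]
        field_simp; ring
    _ ≤ _ := h1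
    _ ≤ _ := by
      apply setIntegral_mono_set (cont_int hc.continuousOn)
      · filter_upwards [ae_restrict_mem measurableSet_Ioo] with s hs
        have : 0 ≤ 1 - s := by linarith [hs.2]
        have := hs.1.le
        simp only [Pi.zero_apply]
        positivity
      · have hsub : Icc (1 - 2 / α) (1 - 1 / α) ⊆ Ioo 0 1 := fun r hr =>
          ⟨by linarith [hr.1], by linarith [hr.2]⟩
        exact hsub.eventuallyLE

/-- Cauchy–Schwarz against a constant. -/
lemma cs_const {g : ℝ → ℝ} {r : ℝ} (hr : r < 1) (hg : ContinuousOn g (Icc r 1)) :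
    (∫ s in r..1, g s) ^ 2 ≤ (1 - r) * ∫ s in r..1, g s ^ 2 := by
  have hi : IntervalIntegrable g volume r 1 := hg.intervalIntegrable_of_Icc hr.le
  have hi2 : IntervalIntegrable (fun s => g s ^ 2) volume r 1 :=
    (hg.pow 2).intervalIntegrable_of_Icc hr.le
  set m := (∫ s in r..1, g s) / (1 - r) with hm
  have h0 : 0 ≤ ∫ s in r..1, (g s - m) ^ 2 :=
    intervalIntegral.integral_nonneg hr.le (fun s _ => sq_nonneg _)
  have h1 : ∫ s in r..1, (g s - m) ^ 2
      = (∫ s in r..1, g s ^ 2) - 2 * m * (∫ s in r..1, g s) + m ^ 2 * (1 - r) := by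
    have : ∀ s, (g s - m) ^ 2 = g s ^ 2 - 2 * m * g s + m ^ 2 := fun s => by ring
    simp_rw [this]
    rw [intervalIntegral.integral_add (hi2.sub (hi.const_mul _)) (by simp),
      intervalIntegral.integral_sub hi2 (hi.const_mul _), intervalIntegral.integral_const_mul]
    simp; ring
  have hr' : 0 < 1 - r := by linarith
  have h2 : (∫ s in r..1, g s) = m * (1 - r) := by rw [hm]; field_simp
  rw [h1, h2] at h0
  rw [h2]
  nlinarith

lemma norm_gradient {N : ℕ} (u : E N → ℝ) (x : E N) : ‖gradient u x‖ = ‖fderiv ℝ u x‖ := by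
  simp [gradient]

lemma grad_integrable {N : ℕ} {u : E N → ℝ} (hu : ContDiffOn ℝ 1 u (closedBall 0 1)) :
    IntegrableOn (fun x => ‖gradient u x‖ ^ 2) (ball (0 : E N) 1) := by
  have hU : UniqueDiffOn ℝ (closedBall (0 : E N) 1) :=
    uniqueDiffOn_convex (convex_closedBall _ _)
      ⟨0, by rw [interior_closedBall _ one_ne_zero]; simp⟩
  have hc := hu.continuousOn_fderivWithin hU le_rfl
  have hi : IntegrableOn (fun x => ‖fderivWithin ℝ u (closedBall (0 : E N) 1) x‖ ^ 2)
      (closedBall (0 : E N) 1) :=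
    (hc.norm.pow 2).integrableOn_compact (isCompact_closedBall _ _)
  refine (hi.mono_set ball_subset_closedBall).congr_fun ?_ measurableSet_ball
  intro x hx
  simp only
  rw [norm_gradient, fderivWithin_of_mem_nhds]
  exact mem_of_superset (isOpen_ball.mem_nhds hx) ball_subset_closedBall

lemma profile {N : ℕ} (hN : 2 ≤ N) {u : E N → ℝ} (hu : memC u) (hr : radial u) :
    ∃ φ g : ℝ → ℝ, (∀ x : E N, u x = φ ‖x‖) ∧ φ 1 = 0 ∧ ContinuousOn φ (Icc 0 1) ∧
      ContinuousOn g (Icc 0 1) ∧ (∀ t ∈ Ioo (0 : ℝ) 1, HasDerivAt φ (g t) t) ∧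
      ∀ x ∈ ball (0 : E N) 1, g ‖x‖ ^ 2 ≤ ‖gradient u x‖ ^ 2 := by
  have := nontriv hN
  obtain ⟨e, he⟩ := exists_norm_eq (E N) zero_le_one
  obtain ⟨hC, hb, -⟩ := hu
  have hU : UniqueDiffOn ℝ (closedBall (0 : E N) 1) :=
    uniqueDiffOn_convex (convex_closedBall _ _)
      ⟨0, by rw [interior_closedBall _ one_ne_zero]; simp⟩
  have hc := hC.continuousOn_fderivWithin hU le_rfl
  have hmaps : MapsTo (fun t : ℝ => t • e) (Icc 0 1) (closedBall (0 : E N) 1) := by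
    intro t ht
    simp [norm_smul, he, abs_of_nonneg ht.1, ht.2]
  have hlin : ContinuousOn (fun t : ℝ => t • e) (Icc 0 1) := by fun_prop
  have hder : ∀ θ : E N, ‖θ‖ = 1 → ∀ t ∈ Ico (0 : ℝ) 1,
      HasDerivAt (fun s : ℝ => u (s • e)) (fderiv ℝ u (t • θ) θ) t := by
    intro θ hθ t ht
    have hfun : (fun s : ℝ => u (s • e)) = fun s : ℝ => u (s • θ) := by
      funext s
      apply hr
      simp [norm_smul, he, hθ]
    rw [hfun]
    have hmem : t • θ ∈ ball (0 : E N) 1 := by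
      simp [norm_smul, hθ, abs_of_nonneg ht.1, ht.2]
    have hd : DifferentiableAt ℝ u (t • θ) :=
      (hC.differentiableOn one_ne_zero).differentiableAt
        (mem_of_superset (isOpen_ball.mem_nhds hmem) ball_subset_closedBall)
    have h1 : HasDerivAt (fun s : ℝ => s • θ) θ t := by
      simpa using (hasDerivAt_id t).smul_const θ
    exact hd.hasFDerivAt.comp_hasDerivAt t h1
  have hgt : ∀ t ∈ Ico (0 : ℝ) 1,
      fderivWithin ℝ u (closedBall 0 1) (t • e) e = fderiv ℝ u (t • e) e := by
    intro t ht
    have hmem : t • e ∈ ball (0 : E N) 1 := by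
      simp [norm_smul, he, abs_of_nonneg ht.1, ht.2]
    rw [fderivWithin_of_mem_nhds
      (mem_of_superset (isOpen_ball.mem_nhds hmem) ball_subset_closedBall)]
  refine ⟨fun t => u (t • e), fun t => fderivWithin ℝ u (closedBall 0 1) (t • e) e,
    ?_, ?_, ?_, ?_, ?_, ?_⟩
  · intro x
    apply hr
    simp [norm_smul, he]
  · apply hb; simp [he]
  · exact hC.continuousOn.comp hlin hmaps
  · exact (hc.comp hlin hmaps).clm_apply continuousOn_const
  · intro t ht
    simp only
    rw [hgt t ⟨ht.1.le, ht.2⟩]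
    exact hder e he t ⟨ht.1.le, ht.2⟩
  · intro x hx
    have hx1 : ‖x‖ < 1 := by simpa using hx
    obtain ⟨θ, hθ, hxθ⟩ : ∃ θ : E N, ‖θ‖ = 1 ∧ ‖x‖ • θ = x := by
      by_cases h0 : x = 0
      · exact ⟨e, he, by simp [h0]⟩
      · refine ⟨‖x‖⁻¹ • x, norm_smul_inv_norm (𝕜 := ℝ) h0, ?_⟩
        rw [smul_smul, mul_inv_cancel₀ (norm_ne_zero_iff.2 h0), one_smul]
    have ht : ‖x‖ ∈ Ico (0 : ℝ) 1 := ⟨norm_nonneg _, hx1⟩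
    simp only
    rw [hgt _ ht, (hder e he _ ht).unique (hder θ hθ _ ht), hxθ, norm_gradient, sq_le_sq,
      abs_of_nonneg (norm_nonneg _)]
    have := (fderiv ℝ u x).le_opNorm θ
    rwa [hθ, mul_one, Real.norm_eq_abs] at this

lemma den_pos {N : ℕ} (hN : 2 ≤ N) {u : E N → ℝ} (hu : memC u) {α p : ℝ} (hα : 0 < α)
    (hp : 1 < p) : 0 < ∫ x in ball (0 : E N) 1, ‖x‖ ^ α * |u x| ^ (p + 1) := by
  have := nontriv hN
  obtain ⟨hC, hb, x, hx, hux⟩ := hu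
  have hcont : ContinuousOn (fun x => ‖x‖ ^ α * |u x| ^ (p + 1)) (closedBall (0 : E N) 1) := by
    apply ContinuousOn.mul
    · exact (continuous_norm.rpow_const (fun _ => Or.inr hα.le)).continuousOn
    · exact hC.continuousOn.abs.rpow_const (fun _ _ => Or.inr (by linarith))
  have hint := (hcont.integrableOn_compact (μ := volume) (isCompact_closedBall _ _)).mono_set
    (ball_subset_closedBall (x := (0 : E N)) (ε := 1))
  rw [setIntegral_pos_iff_support_of_nonneg_ae _ hint]
  · have hxb : x ∈ ball (0 : E N) 1 := by
      have h1 : ‖x‖ ≤ 1 := by simpa using hx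
      have h2 : ‖x‖ ≠ 1 := fun h => hux (hb x h)
      simpa using lt_of_le_of_ne h1 h2
    have hopen : IsOpen (ball (0 : E N) 1 ∩ u ⁻¹' {0}ᶜ) :=
      (hC.continuousOn.mono ball_subset_closedBall).isOpen_inter_preimage isOpen_ball
        isOpen_compl_singleton
    have hopen2 := hopen.inter (isOpen_compl_singleton (x := (0 : E N)))
    have hne : ((ball (0 : E N) 1 ∩ u ⁻¹' {0}ᶜ) ∩ {0}ᶜ).Nonempty :=
      (dense_compl_singleton (0 : E N)).inter_open_nonempty _ hopen ⟨x, hxb, hux⟩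
    refine lt_of_lt_of_le (hopen2.measure_pos volume hne) (measure_mono ?_)
    rintro y ⟨⟨hy1, hy2⟩, hy3⟩
    refine ⟨?_, hy1⟩
    have h1 : 0 < ‖y‖ := norm_pos_iff.2 hy3
    have h2 : 0 < |u y| := abs_pos.2 hy2
    have : 0 < ‖y‖ ^ α * |u y| ^ (p + 1) := by positivity
    exact this.ne'
  · exact Eventually.of_forall fun x => by simp only [Pi.zero_apply]; positivity

lemma pointwise {N : ℕ} {φ g : ℝ → ℝ} (h1 : φ 1 = 0)
    (hφ : ContinuousOn φ (Icc 0 1)) (hg : ContinuousOn g (Icc 0 1))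
    (hd : ∀ t ∈ Ioo (0 : ℝ) 1, HasDerivAt φ (g t) t) {r : ℝ} (hr : r ∈ Ioo (0 : ℝ) 1) :
    r ^ (N - 1) * φ r ^ 2 ≤ (1 - r) * ∫ s in Ioo (0 : ℝ) 1, s ^ (N - 1) * g s ^ 2 := by
  have hsub : Icc r 1 ⊆ Icc 0 1 := Icc_subset_Icc_left hr.1.le
  have hgr := hg.mono hsub
  have e1 := intervalIntegral.integral_eq_sub_of_hasDerivAt_of_le hr.2.le (hφ.mono hsub)
    (fun t ht => hd t ⟨hr.1.trans ht.1, ht.2⟩) (hgr.intervalIntegrable_of_Icc hr.2.le)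
  have e2 := cs_const hr.2 hgr
  rw [e1, h1, zero_sub, neg_sq] at e2
  have hr0 : 0 ≤ r ^ (N - 1) := pow_nonneg hr.1.le _
  have hc : ContinuousOn (fun s : ℝ => s ^ (N - 1) * g s ^ 2) (Icc 0 1) :=
    ((continuous_pow (N - 1)).continuousOn).mul (hg.pow 2)
  have e3 : r ^ (N - 1) * ∫ s in r..1, g s ^ 2 ≤ ∫ s in Ioo (0 : ℝ) 1, s ^ (N - 1) * g s ^ 2 := by
    rw [intervalIntegral.integral_of_le hr.2.le, integral_Ioc_eq_integral_Ioo,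
      ← integral_const_mul]
    calc _ ≤ ∫ s in Ioo r 1, s ^ (N - 1) * g s ^ 2 := by
          apply setIntegral_mono_on
          · exact (((hgr.pow 2).integrableOn_Icc).mono_set Ioo_subset_Icc_self).const_mul _
          · exact ((hc.mono hsub).integrableOn_Icc).mono_set Ioo_subset_Icc_self
          · exact measurableSet_Ioo
          · intro s hs
            exact mul_le_mul_of_nonneg_right (pow_le_pow_left₀ hr.1.le hs.1.le _) (sq_nonneg _)
      _ ≤ _ := by
          apply setIntegral_mono_set (cont_int hc)
          · filter_upwards [ae_restrict_mem measurableSet_Ioo] with s hs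
            have := hs.1.le
            simp only [Pi.zero_apply]
            positivity
          · exact (Ioo_subset_Ioo_left hr.1.le).eventuallyLE
  calc r ^ (N - 1) * φ r ^ 2 ≤ r ^ (N - 1) * ((1 - r) * ∫ s in r..1, g s ^ 2) :=
        mul_le_mul_of_nonneg_left e2 hr0
    _ = (1 - r) * (r ^ (N - 1) * ∫ s in r..1, g s ^ 2) := by ring
    _ ≤ _ := mul_le_mul_of_nonneg_left e3 (by linarith [hr.2])

def cLow (N : ℕ) (p : ℝ) : ℝ :=
  om N / ((om N * Real.Gamma ((p + 1) / 2 + 1)) ^ (2 / (p + 1)) * 2 ^ (1 + 2 / (p + 1)))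

lemma cLow_pos {N : ℕ} (hN : 2 ≤ N) {p : ℝ} (hp : 1 < p) : 0 < cLow N p := by
  have h1 := om_pos hN
  have h2 : 0 < Real.Gamma ((p + 1) / 2 + 1) := Real.Gamma_pos_of_pos (by linarith)
  unfold cLow
  positivity

lemma lower {N : ℕ} (hN : 2 ≤ N) {p : ℝ} (hp : 1 < p) {α : ℝ} (hα : 0 < α)
    (hα' : ((N - 1 : ℕ) : ℝ) * (p + 1) ≤ α) {u : E N → ℝ} (hu : memC u) (hr : radial u) :
    cLow N p * α ^ (1 + 2 / (p + 1)) ≤ ray α p u := by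
  obtain ⟨φ, g, huφ, h1, hφ, hg, hd, hgr⟩ := profile hN hu hr
  have hI := den_pos hN hu hα hp
  have hom := om_pos hN
  have hD : om N * ∫ s in Ioo (0 : ℝ) 1, s ^ (N - 1) * g s ^ 2
      ≤ ∫ x in ball (0 : E N) 1, ‖gradient u x‖ ^ 2 := by
    rw [← polar hN (fun s => g s ^ 2)]
    apply integral_mono_of_nonneg
    · exact Eventually.of_forall fun x => sq_nonneg _
    · exact grad_integrable hu.1
    · filter_upwards [ae_restrict_mem measurableSet_ball] with x hx using hgr x hx
  set A := ∫ s in Ioo (0 : ℝ) 1, s ^ (N - 1) * g s ^ 2 with hA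
  have hA0 : 0 ≤ A := setIntegral_nonneg measurableSet_Ioo fun s hs =>
    mul_nonneg (pow_nonneg hs.1.le _) (sq_nonneg _)
  set n : ℝ := ((N - 1 : ℕ) : ℝ) with hn
  have hn0 : 0 ≤ n := Nat.cast_nonneg _
  set k := (p + 1) / 2 with hk
  have hk1 : 1 < k := by rw [hk]; linarith
  set γ := n + α - n * k with hγ
  have hγα : α / 2 ≤ γ := by rw [hγ, hk]; linarith
  have hγ0 : 0 < γ := by linarith
  have hIeq : ∫ x in ball (0 : E N) 1, ‖x‖ ^ α * |u x| ^ (p + 1)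
      = om N * ∫ r in Ioo (0 : ℝ) 1, r ^ (N - 1) * (r ^ α * |φ r| ^ (p + 1)) := by
    rw [← polar hN (fun r => r ^ α * |φ r| ^ (p + 1))]
    simp_rw [huφ]
  have hIle : ∫ r in Ioo (0 : ℝ) 1, r ^ (N - 1) * (r ^ α * |φ r| ^ (p + 1))
      ≤ A ^ k * ((1 / γ) ^ (k + 1) * Real.Gamma (k + 1)) := by
    calc _ ≤ ∫ r in Ioo (0 : ℝ) 1, A ^ k * ((1 - r) ^ k * r ^ γ) := by
          apply integral_mono_of_nonneg
          · filter_upwards [ae_restrict_mem measurableSet_Ioo] with s hs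
            have := hs.1.le
            simp only [Pi.zero_apply]
            positivity
          · exact (cont_int (J_cont (by linarith) hγ0.le).continuousOn).const_mul _
          · filter_upwards [ae_restrict_mem measurableSet_Ioo] with r hr
            have hr0 := hr.1
            have hr1 : 0 ≤ 1 - r := by linarith [hr.2]
            have hp1 := pointwise (N := N) h1 hφ hg hd hr
            rw [← hA] at hp1
            have h2 : φ r ^ 2 ≤ (1 - r) * A * r ^ (-n) := by
              rw [Real.rpow_neg hr0.le, hn, Real.rpow_natCast, ← div_eq_mul_inv,
                le_div_iff₀ (pow_pos hr0 _)]
              linarith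
            have h3 : |φ r| ^ (p + 1) ≤ ((1 - r) * A * r ^ (-n)) ^ k := by
              calc |φ r| ^ (p + 1) = (φ r ^ 2) ^ k := by
                    rw [← sq_abs, ← Real.rpow_natCast, ← Real.rpow_mul (abs_nonneg _), hk]
                    congr 1; push_cast; ring
                _ ≤ _ := Real.rpow_le_rpow (sq_nonneg _) h2 (by linarith)
            calc r ^ (N - 1) * (r ^ α * |φ r| ^ (p + 1))
                ≤ r ^ (N - 1) * (r ^ α * ((1 - r) * A * r ^ (-n)) ^ k) := by gcongr
              _ = A ^ k * ((1 - r) ^ k * r ^ γ) := by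
                  rw [Real.mul_rpow (by positivity) (by positivity), Real.mul_rpow hr1 hA0,
                    ← Real.rpow_mul hr0.le, ← Real.rpow_natCast r (N - 1), ← hn]
                  have : r ^ γ = r ^ n * r ^ α * r ^ (-n * k) := by
                    rw [← Real.rpow_add hr0, ← Real.rpow_add hr0]; congr 1; rw [hγ]; ring
                  rw [this]; ring
      _ = A ^ k * ∫ r in Ioo (0 : ℝ) 1, (1 - r) ^ k * r ^ γ := integral_const_mul _ _
      _ ≤ _ := mul_le_mul_of_nonneg_left (J_le (by linarith) hγ0) (by positivity)
  have hG : 0 < Real.Gamma (k + 1) := Real.Gamma_pos_of_pos (by linarith)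
  have hγle : (1 / γ) ^ (k + 1) ≤ (2 / α) ^ (k + 1) := by
    apply Real.rpow_le_rpow (by positivity) _ (by linarith)
    rw [div_le_div_iff₀ hγ0 hα]; linarith
  have hItot : ∫ x in ball (0 : E N) 1, ‖x‖ ^ α * |u x| ^ (p + 1)
      ≤ (om N * Real.Gamma (k + 1)) * (A ^ k * (2 / α) ^ (k + 1)) := by
    rw [hIeq]
    calc _ ≤ om N * (A ^ k * ((2 / α) ^ (k + 1) * Real.Gamma (k + 1))) := by
          apply mul_le_mul_of_nonneg_left _ hom.le
          refine hIle.trans ?_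
          gcongr
      _ = _ := by ring
  have hkq : 2 / (p + 1) = 1 / k := by rw [hk]; field_simp
  have hIpow : (∫ x in ball (0 : E N) 1, ‖x‖ ^ α * |u x| ^ (p + 1)) ^ (2 / (p + 1))
      ≤ (om N * Real.Gamma (k + 1)) ^ (2 / (p + 1)) * (A * (2 / α) ^ (1 + 2 / (p + 1))) := by
    calc _ ≤ ((om N * Real.Gamma (k + 1)) * (A ^ k * (2 / α) ^ (k + 1))) ^ (2 / (p + 1)) :=
          Real.rpow_le_rpow hI.le hItot (by positivity)
      _ = _ := by
          rw [Real.mul_rpow (by positivity) (by positivity),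
            Real.mul_rpow (x := A ^ k) (by positivity) (by positivity), ← Real.rpow_mul hA0,
            ← Real.rpow_mul (by positivity), hkq]
          have hk0 : k ≠ 0 := by linarith
          rw [mul_one_div_cancel hk0, Real.rpow_one]
          congr 4
          field_simp
  unfold ray
  rw [le_div_iff₀ (Real.rpow_pos_of_pos hI _)]
  refine le_trans ?_ hD
  have hc0 := cLow_pos hN hp
  calc _ ≤ cLow N p * α ^ (1 + 2 / (p + 1)) *
        ((om N * Real.Gamma (k + 1)) ^ (2 / (p + 1)) * (A * (2 / α) ^ (1 + 2 / (p + 1)))) :=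
        mul_le_mul_of_nonneg_left hIpow (by positivity)
    _ = om N * A := by
        rw [Real.div_rpow two_pos.le hα.le, cLow, ← hk]
        field_simp

def tst (N : ℕ) (α : ℝ) (x : E N) : ℝ := ‖x‖ ^ α - ‖x‖ ^ (α + 1)

lemma tst_radial {N : ℕ} (α : ℝ) : radial (tst N α) := by
  intro x y h
  simp [tst, h]

lemma tst_memC {N : ℕ} (hN : 2 ≤ N) {α : ℝ} (hα : 4 ≤ α) : memC (tst N α) := by
  have := nontriv hN
  refine ⟨?_, ?_, ?_⟩
  · exact ((contDiff_norm_rpow (by linarith)).sub (contDiff_norm_rpow (by linarith))).contDiffOn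
  · intro x hx
    simp [tst, hx]
  · obtain ⟨e, he⟩ := exists_norm_eq (E N) (show (0 : ℝ) ≤ 1 / 2 by norm_num)
    refine ⟨e, by simp only [mem_closedBall, dist_zero_right, he]; norm_num, ?_⟩
    simp only [tst, he]
    rw [Real.rpow_add_one (by norm_num)]
    have : (0 : ℝ) < (1 / 2) ^ α := by positivity
    intro h
    linarith

lemma tst_grad {N : ℕ} {α : ℝ} (hα : 4 ≤ α) {x : E N} (hx : x ∈ ball (0 : E N) 1) :
    ‖gradient (tst N α) x‖ ^ 2 ≤ 2 * α ^ 2 * ((1 - ‖x‖) ^ (2 : ℝ) * ‖x‖ ^ (2 * α - 2))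
      + 2 * ((1 - ‖x‖) ^ (0 : ℝ) * ‖x‖ ^ (2 * α - 2)) := by
  have hx1 : ‖x‖ < 1 := by simpa using hx
  have h1 := (hasFDerivAt_norm_rpow x (p := α) (by linarith)).sub
    (hasFDerivAt_norm_rpow x (p := α + 1) (by linarith))
  have h2 : fderiv ℝ (tst N α) x = (α * ‖x‖ ^ (α - 2) - (α + 1) * ‖x‖ ^ (α + 1 - 2)) •
      (innerSL ℝ) x := by
    rw [sub_smul]
    exact h1.fderiv
  rw [norm_gradient, h2, norm_smul, innerSL_apply_norm]
  rcases (norm_nonneg x).eq_or_lt with h0 | h0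
  · rw [← h0]
    simp
    positivity
  set r := ‖x‖
  have e1 : r ^ (α - 2) * r = r ^ (α - 1) := by
    rw [← Real.rpow_add_one h0.ne']; congr 1; ring
  have e2 : r ^ (α + 1 - 2) * r = r ^ (α - 1) * r := by
    congr 2; ring
  have e3 : r ^ (2 * α - 2) = r ^ (α - 1) * r ^ (α - 1) := by
    rw [← Real.rpow_add h0]; congr 1; ring
  rw [mul_pow, Real.norm_eq_abs, sq_abs, ← mul_pow, sub_mul, mul_assoc, mul_assoc, e1, e2, e3,
    Real.rpow_zero, Real.rpow_two]
  set y := r ^ (α - 1)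
  have : (α * y - (α + 1) * (y * r)) ^ 2 = y ^ 2 * (α * (1 - r) - r) ^ 2 := by ring
  rw [this]
  have h3 : (α * (1 - r) - r) ^ 2 ≤ 2 * α ^ 2 * (1 - r) ^ 2 + 2 := by
    nlinarith [sq_nonneg (α * (1 - r) + r)]
  nlinarith [mul_le_mul_of_nonneg_left h3 (sq_nonneg y)]

lemma tst_num {N : ℕ} (hN : 2 ≤ N) {α : ℝ} (hα : 4 ≤ α) :
    ∫ x in ball (0 : E N) 1, ‖gradient (tst N α) x‖ ^ 2 ≤ 6 * om N * α⁻¹ := by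
  have hα0 : 0 < α := by linarith
  set f : ℝ → ℝ := fun r => 2 * α ^ 2 * ((1 - r) ^ (2 : ℝ) * r ^ (2 * α - 2))
      + 2 * ((1 - r) ^ (0 : ℝ) * r ^ (2 * α - 2)) with hf
  have hγ : 0 < 2 * α - 2 := by linarith
  have c1 := J_cont (k := 2) two_pos.le hγ.le
  have c2 := J_cont (k := 0) le_rfl hγ.le
  have hfc : Continuous f := (c1.const_mul _).add (c2.const_mul _)
  have hf0 : ∀ r ∈ Ioo (0 : ℝ) 1, 0 ≤ f r := by
    intro r hr
    have h1 : 0 ≤ 1 - r := by linarith [hr.2]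
    have h2 := hr.1.le
    simp only [hf]
    positivity
  have hγα : 1 / (2 * α - 2) ≤ 1 / α := one_div_le_one_div_of_le hα0 (by linarith)
  have hγ1 : 0 ≤ 1 / (2 * α - 2) := by positivity
  calc _ ≤ ∫ x in ball (0 : E N) 1, f ‖x‖ := by
        apply integral_mono_of_nonneg
        · exact Eventually.of_forall fun x => sq_nonneg _
        · exact ((hfc.comp continuous_norm).continuousOn.integrableOn_compact
            (isCompact_closedBall _ _)).mono_set ball_subset_closedBall
        · filter_upwards [ae_restrict_mem measurableSet_ball] with x hx using tst_grad hα hx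
    _ = om N * ∫ y in Ioo (0 : ℝ) 1, y ^ (N - 1) * f y := polar hN f
    _ ≤ om N * ∫ y in Ioo (0 : ℝ) 1, f y := by
        apply mul_le_mul_of_nonneg_left _ (om_pos hN).le
        apply setIntegral_mono_on
        · exact cont_int ((continuous_pow (N - 1)).mul hfc).continuousOn
        · exact cont_int hfc.continuousOn
        · exact measurableSet_Ioo
        · intro r hr
          exact mul_le_of_le_one_left (hf0 r hr) (pow_le_one₀ hr.1.le hr.2.le)
    _ ≤ om N * (6 * α⁻¹) := by
        apply mul_le_mul_of_nonneg_left _ (om_pos hN).le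
        have j1 := J_le (k := 2) two_pos.le hγ
        have j2 := J_le (k := 0) le_rfl hγ
        have g3 : Real.Gamma (2 + 1) = 2 := by
          rw [Real.Gamma_add_one two_ne_zero, Real.Gamma_two]; norm_num
        have g1 : Real.Gamma (0 + 1) = 1 := by rw [zero_add, Real.Gamma_one]
        rw [g3] at j1
        rw [g1, zero_add, Real.rpow_one, mul_one] at j2
        have t : ((1 : ℝ) / (2 * α - 2)) ^ ((2 : ℝ) + 1) = (1 / (2 * α - 2)) ^ 3 := by
          rw [← Real.rpow_natCast]; norm_num
        rw [t] at j1
        have j3 : (1 / (2 * α - 2)) ^ 3 ≤ (1 / α) ^ 3 := pow_le_pow_left₀ hγ1 hγα 3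
        simp only [hf]
        rw [integral_add ((cont_int c1.continuousOn).const_mul _)
          ((cont_int c2.continuousOn).const_mul _), integral_const_mul, integral_const_mul]
        have j4 : 2 * α ^ 2 * (∫ r in Ioo (0 : ℝ) 1, (1 - r) ^ (2 : ℝ) * r ^ (2 * α - 2))
            ≤ 2 * α ^ 2 * ((1 / α) ^ 3 * 2) :=
          mul_le_mul_of_nonneg_left (by linarith) (by positivity)
        have j5 : 2 * α ^ 2 * ((1 / α) ^ 3 * 2) = 4 * α⁻¹ := by field_simp; norm_num
        have j6 : 1 / α = α⁻¹ := one_div _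
        linarith
    _ = _ := by ring

def cUp (N : ℕ) (p : ℝ) : ℝ :=
  6 * om N / (om N * Real.exp (-(4 * (((N - 1 : ℕ) : ℝ) + 1 + (p + 1))))) ^ (2 / (p + 1))

lemma tst_den {N : ℕ} (hN : 2 ≤ N) {α p : ℝ} (hp : 1 < p) (hα : 4 ≤ α) :
    om N * Real.exp (-(4 * (((N - 1 : ℕ) : ℝ) + 1 + (p + 1)))) * α ^ (-(p + 1 + 1)) ≤
    ∫ x in ball (0 : E N) 1, ‖x‖ ^ α * |tst N α x| ^ (p + 1) := by
  have hα0 : 0 < α := by linarith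
  have e := polar hN (fun r => r ^ α * |r ^ α - r ^ (α + 1)| ^ (p + 1))
  unfold tst
  rw [e, mul_assoc]
  apply mul_le_mul_of_nonneg_left _ (om_pos hN).le
  set n : ℝ := ((N - 1 : ℕ) : ℝ) with hn
  have hn0 : 0 ≤ n := Nat.cast_nonneg _
  have j := J_ge (k := p + 1) (γ := n + α + α * (p + 1)) (α := α) (K := n + 1 + (p + 1))
    (by linarith) (by positivity) hα (by nlinarith)
  refine j.trans_eq ?_
  apply setIntegral_congr_fun measurableSet_Ioo
  intro r hr
  have hr0 := hr.1
  have hr1 : 0 ≤ 1 - r := by linarith [hr.2]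
  simp only
  have h1 : r ^ α - r ^ (α + 1) = r ^ α * (1 - r) := by rw [Real.rpow_add_one hr0.ne']; ring
  rw [h1, abs_of_nonneg (by positivity), Real.mul_rpow (by positivity) hr1,
    ← Real.rpow_mul hr0.le, Real.rpow_add hr0, Real.rpow_add hr0, hn, Real.rpow_natCast]
  ring

lemma upper {N : ℕ} (hN : 2 ≤ N) {α p : ℝ} (hp : 1 < p) (hα : 4 ≤ α) :
    ray α p (tst N α) ≤ cUp N p * α ^ (1 + 2 / (p + 1)) := by
  have hα0 : 0 < α := by linarith
  have hom := om_pos hN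
  have hd := tst_den hN hp hα
  have hnum := tst_num hN hα
  unfold ray cUp
  set K := om N * Real.exp (-(4 * (((N - 1 : ℕ) : ℝ) + 1 + (p + 1)))) with hK
  have hK0 : 0 < K := by positivity
  have hd2 : K ^ (2 / (p + 1)) * α ^ (-(2 + 2 / (p + 1))) ≤
      (∫ x in ball (0 : E N) 1, ‖x‖ ^ α * |tst N α x| ^ (p + 1)) ^ (2 / (p + 1)) := by
    refine le_trans (le_of_eq ?_) (Real.rpow_le_rpow (by positivity) hd (by positivity))
    rw [Real.mul_rpow hK0.le (by positivity), ← Real.rpow_mul hα0.le]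
    congr 2
    field_simp
  calc _ ≤ (6 * om N * α⁻¹) / (K ^ (2 / (p + 1)) * α ^ (-(2 + 2 / (p + 1)))) :=
        div_le_div₀ (by positivity) hnum (by positivity) hd2
    _ = _ := by
      have : α ^ (1 + 2 / (p + 1)) = α⁻¹ * α ^ (2 + 2 / (p + 1)) := by
        rw [← Real.rpow_neg_one, ← Real.rpow_add hα0]; congr 1; ring
      rw [this, Real.rpow_neg hα0.le]
      field_simp

/-- Asymptotics of the radial ground-state level: S^rad_{α,p} ~ α^{1+2/(p+1)} as α → ∞. -/
theorem stmt5 {N : ℕ} (hN : 2 ≤ N) (p : ℝ) (hp : 1 < p)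
    (hsub : 3 ≤ N → p + 1 < 2 * (N : ℝ) / ((N : ℝ) - 2)) :
    ∃ c₁ c₂ α₀ : ℝ, 0 < c₁ ∧ c₁ ≤ c₂ ∧ 0 < α₀ ∧
      ∀ α : ℝ, α₀ ≤ α →
        c₁ * α ^ (1 + 2 / (p + 1)) ≤ SradVal N α p ∧
        SradVal N α p ≤ c₂ * α ^ (1 + 2 / (p + 1)) ∧
        ∀ u : E N → ℝ, memC u → radial u → c₁ * α ^ (1 + 2 / (p + 1)) ≤ ray α p u := by
  refine ⟨cLow N p, max (cLow N p) (cUp N p), max 4 (((N - 1 : ℕ) : ℝ) * (p + 1)),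
    cLow_pos hN hp, le_max_left _ _, by positivity, ?_⟩
  intro α hα
  have h4 : 4 ≤ α := (le_max_left _ _).trans hα
  have h5 := (le_max_right _ _).trans hα
  have hα0 : 0 < α := by linarith
  have hlow : ∀ u : E N → ℝ, memC u → radial u → cLow N p * α ^ (1 + 2 / (p + 1)) ≤ ray α p u :=
    fun u hu hr => lower hN hp hα0 h5 hu hr
  have hmem : ray α p (tst N α) ∈ {c | ∃ u : E N → ℝ, memC u ∧ radial u ∧ ray α p u = c} :=
    ⟨tst N α, tst_memC hN h4, tst_radial α, rfl⟩
  have hlb : cLow N p * α ^ (1 + 2 / (p + 1)) ∈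
      lowerBounds {c | ∃ u : E N → ℝ, memC u ∧ radial u ∧ ray α p u = c} := by
    rintro c ⟨u, hu, hr, rfl⟩
    exact hlow u hu hr
  refine ⟨le_csInf ⟨_, hmem⟩ hlb, ?_, hlow⟩
  refine (csInf_le ⟨_, hlb⟩ hmem).trans ((upper hN hp h4).trans ?_)
  exact mul_le_mul_of_nonneg_right (le_max_right _ _) (by positivity)
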